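/- arXiv:1906.09762 — 2 statements merged into one kernel-verified Lean document; each statement's English description precedes it below -/
import Mathlib

section
/- Fix β > 0, B > 0, N₀ > 0, L > 0 and x > 0, and set a = β·N₀/(x·B). Then ∫₀^∞ (1/L)·exp(−h/L)·max(x·B/β − N₀/h, 0) dh = (x·B/β)·exp(−a/L) − (N₀/L)·E₁(a/L). -/
/-!
With `c = x * B / β`, the power `c - N₀ / h` is positive exactly above the cutoff gain
`a = N₀ / c`, so the positive part only truncates the range of integration. In the normalised gain
`t = h / L` the exponential density becomes `exp (-t)`, and the constant and `1 / t` terms of the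
power contribute an elementary exponential and an exponential integral respectively.
-/

open MeasureTheory

noncomputable def E1 (y : ℝ) : ℝ := ∫ t in Set.Ioi y, Real.exp (-t) / t

lemma integrableOn_exp_neg_div_Ioi {y : ℝ} (hy : 0 < y) :
    IntegrableOn (fun t : ℝ => Real.exp (-t) / t) (Set.Ioi y) := by
  refine ((integrableOn_exp_neg_Ioi y).div_const y).mono'
    (Measurable.aestronglyMeasurable (by fun_prop)) ?_
  filter_upwards [ae_restrict_mem measurableSet_Ioi] with t (hyt : y < t)
  have ht : 0 < t := hy.trans hyt
  rw [Real.norm_of_nonneg (by positivity)]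
  gcongr

lemma integral_exp_neg_mul_sub_div_Ioi {y : ℝ} (hy : 0 < y) (c d : ℝ) :
    ∫ t in Set.Ioi y, Real.exp (-t) * (c - d / t) = c * Real.exp (-y) - d * E1 y := by
  calc ∫ t in Set.Ioi y, Real.exp (-t) * (c - d / t)
      = ∫ t in Set.Ioi y, (c * Real.exp (-t) - d * (Real.exp (-t) / t)) := by
        congr 1 with t
        ring
    _ = c * Real.exp (-y) - d * E1 y := by
        rw [integral_sub ((integrableOn_exp_neg_Ioi y).const_mul c)
          ((integrableOn_exp_neg_div_Ioi hy).const_mul d), integral_const_mul, integral_const_mul,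
          integral_exp_neg_Ioi, E1]

lemma integral_exponential_density_smul_Ioi {E : Type*} [NormedAddCommGroup E] [NormedSpace ℝ E]
    {L : ℝ} (hL : 0 < L) (a : ℝ) (f : ℝ → E) :
    ∫ h in Set.Ioi a, ((1 / L) * Real.exp (-(h / L))) • f h =
      ∫ t in Set.Ioi (a / L), Real.exp (-t) • f (L * t) := by
  have hsubst := integral_comp_mul_left_Ioi'
    (fun h => ((1 / L) * Real.exp (-(h / L))) • f h) (a / L) hL
  rw [mul_div_cancel₀ a hL.ne', ← integral_smul] at hsubst
  rw [← hsubst]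
  congr 1 with t
  rw [smul_smul, mul_div_cancel_left₀ t hL.ne', ← mul_assoc, mul_one_div_cancel hL.ne', one_mul]

lemma max_sub_div_zero_eq_indicator {c h : ℝ} (hc : 0 < c) (hh : 0 < h) (N : ℝ) :
    max (c - N / h) 0 = (Set.Ioi (N / c)).indicator (fun h => c - N / h) h := by
  have hcutoff : h ∈ Set.Ioi (N / c) ↔ 0 < c - N / h := by
    rw [Set.mem_Ioi, sub_pos, div_lt_comm₀ hc hh]
  by_cases hmem : h ∈ Set.Ioi (N / c)
  · rw [Set.indicator_of_mem hmem, max_eq_left (hcutoff.mp hmem).le]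
  · rw [Set.indicator_of_notMem hmem, max_eq_right (not_lt.mp (hcutoff.not.mp hmem))]

lemma integral_mul_max_sub_div_zero_Ioi {c N : ℝ} (hc : 0 < c) (hN : 0 ≤ N) (w : ℝ → ℝ) :
    ∫ h in Set.Ioi 0, w h * max (c - N / h) 0 = ∫ h in Set.Ioi (N / c), w h * (c - N / h) := by
  have hsubset : Set.Ioi (N / c) ⊆ Set.Ioi 0 := Set.Ioi_subset_Ioi (by positivity)
  calc ∫ h in Set.Ioi 0, w h * max (c - N / h) 0
      = ∫ h in Set.Ioi 0, (Set.Ioi (N / c)).indicator (fun h => w h * (c - N / h)) h :=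
        setIntegral_congr_fun measurableSet_Ioi fun h hh => by
          simp only [max_sub_div_zero_eq_indicator hc hh, Set.indicator_mul_right]
    _ = ∫ h in Set.Ioi (N / c), w h * (c - N / h) := by
        rw [setIntegral_indicator measurableSet_Ioi, Set.inter_eq_right.mpr hsubset]

theorem stmt_3 (β B N₀ L x a : ℝ) (hβ : 0 < β) (hB : 0 < B) (hN : 0 < N₀) (hL : 0 < L)
    (hx : 0 < x) (ha : a = β * N₀ / (x * B)) :
    ∫ h in Set.Ioi (0 : ℝ), (1 / L) * Real.exp (-(h / L)) * max (x * B / β - N₀ / h) 0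
      = (x * B / β) * Real.exp (-(a / L)) - (N₀ / L) * E1 (a / L) := by
  have hc : 0 < x * B / β := by positivity
  have hcutoff : N₀ / (x * B / β) = a := by rw [ha, div_div_eq_mul_div, mul_comm N₀]
  have ha_pos : 0 < a := hcutoff ▸ div_pos hN hc
  calc ∫ h in Set.Ioi (0 : ℝ), (1 / L) * Real.exp (-(h / L)) * max (x * B / β - N₀ / h) 0
      = ∫ h in Set.Ioi a, (1 / L) * Real.exp (-(h / L)) * (x * B / β - N₀ / h) := by
        rw [integral_mul_max_sub_div_zero_Ioi hc hN.le, hcutoff]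
    _ = ∫ t in Set.Ioi (a / L), Real.exp (-t) * (x * B / β - N₀ / (L * t)) :=
        integral_exponential_density_smul_Ioi hL a fun h => x * B / β - N₀ / h
    _ = ∫ t in Set.Ioi (a / L), Real.exp (-t) * (x * B / β - N₀ / L / t) := by
        simp only [div_div]
    _ = (x * B / β) * Real.exp (-(a / L)) - (N₀ / L) * E1 (a / L) :=
        integral_exp_neg_mul_sub_div_Ioi (div_pos ha_pos hL) _ _
end

section
/- Fix β > 0, B > 0, N₀ > 0, L > 0, k > 0, c > 0, λ̄ ∈ ℝ, and set c₀ = β·N₀/(B·L). Define G : (0,∞) → ℝ by G(x) = β·((x·B/β)·exp(−c₀/x) − (N₀/L)·E₁(c₀/x)) + (c·β/k²)·(λ̄ − B·E₁(c₀/x))². Then G is differentiable on (0,∞) with G'(x) = B·exp(−c₀/x)·(1 − (2·c·β/(k²·x))·(λ̄ − B·E₁(c₀/x))); in particular G'(x) ≤ 0 at every x > 0 with x ≤ (2·c·β/k²)·(λ̄ − B·E₁(c₀/x)). -/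
open MeasureTheory

/-!
Write `v(x) = B e^{-c₀/x} / x`. By the fundamental theorem of calculus `v` is the derivative of the
average rate `V(x) = B E₁(c₀/x)`. Since `B c₀ = β N₀ / L`, the power term is
`P(x) = B (x e^{-c₀/x} - c₀ E₁(c₀/x))`, and `P'(x) = B e^{-c₀/x} = x v(x)`: at level `x`, one more
unit of rate costs `x` units of power. Hence `G'(x) = v(x) (x - V_l)` with
`V_l = (2cβ/k²) (λ̄ - V(x))`, and the sign of `G'` is that of `x - V_l`.
-/

open Set Topology

lemma hasDerivAt_integral_Ioi {E : Type*} [NormedAddCommGroup E] [NormedSpace ℝ E]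
    [CompleteSpace E] {f : ℝ → E} {a y : ℝ} (hay : a < y) (hf : IntegrableOn f (Ioi a))
    (hfy : ContinuousAt f y) : HasDerivAt (fun u ↦ ∫ t in Ioi u, f t) (-f y) y := by
  have hmeas : StronglyMeasurableAtFilter f (𝓝 y) :=
    ⟨Ioi a, Ioi_mem_nhds hay, hf.aestronglyMeasurable⟩
  have hint : HasDerivAt (fun u ↦ ∫ t in u..y, f t) (-f y) y :=
    intervalIntegral.integral_hasDerivAt_left (by simp) hmeas hfy
  refine (hint.add_const (∫ t in Ioi y, f t)).congr_of_eventuallyEq ?_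
  filter_upwards [lt_mem_nhds hay] with u hu
  exact (intervalIntegral.integral_interval_add_Ioi (hf.mono_set (Ioi_subset_Ioi hu.le))
    (hf.mono_set (Ioi_subset_Ioi hay.le))).symm

lemma integrableOn_exp_neg_div_Ioi_s17 {a : ℝ} (ha : 0 < a) :
    IntegrableOn (fun t ↦ Real.exp (-t) / t) (Ioi a) := by
  have hmeas : Measurable fun t : ℝ ↦ Real.exp (-t) / t := by fun_prop
  refine ((integrableOn_exp_neg_Ioi a).div_const a).mono' hmeas.aestronglyMeasurable ?_
  refine ae_restrict_of_forall_mem measurableSet_Ioi fun t (hat : a < t) ↦ ?_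
  have ht : 0 < t := ha.trans hat
  rw [Real.norm_of_nonneg (by positivity)]
  gcongr

lemma hasDerivAt_E1 {y : ℝ} (hy : 0 < y) : HasDerivAt E1 (-(Real.exp (-y) / y)) y :=
  hasDerivAt_integral_Ioi (half_lt_self hy) (integrableOn_exp_neg_div_Ioi_s17 (half_pos hy))
    (ContinuousAt.div (by fun_prop) continuousAt_id hy.ne')

lemma hasDerivAt_const_div {𝕜 : Type*} [NontriviallyNormedField 𝕜] (a : 𝕜) {x : 𝕜} (hx : x ≠ 0) :
    HasDerivAt (fun z ↦ a / z) (-(a / x ^ 2)) x := by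
  simpa [neg_div] using (hasDerivAt_const x a).fun_div (hasDerivAt_id x) hx

lemma hasDerivAt_E1_const_div {a x : ℝ} (hax : 0 < a / x) :
    HasDerivAt (fun z ↦ E1 (a / z)) (Real.exp (-(a / x)) / x) x := by
  obtain ⟨ha, hx⟩ := div_ne_zero_iff.mp hax.ne'
  refine ((hasDerivAt_E1 hax).comp x (hasDerivAt_const_div a hx)).congr_deriv ?_
  field_simp

lemma hasDerivAt_mul_exp_neg_div_sub_mul_E1 {a x : ℝ} (hax : 0 < a / x) :
    HasDerivAt (fun z ↦ z * Real.exp (-(a / z)) - a * E1 (a / z)) (Real.exp (-(a / x))) x := by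
  have hx : x ≠ 0 := (div_ne_zero_iff.mp hax.ne').2
  have hexp : HasDerivAt (fun z ↦ Real.exp (-(a / z))) (Real.exp (-(a / x)) * (a / x ^ 2)) x := by
    simpa using (hasDerivAt_const_div a hx).fun_neg.exp
  refine (((hasDerivAt_id' x).fun_mul hexp).fun_sub
    ((hasDerivAt_E1_const_div hax).const_mul a)).congr_deriv ?_
  field_simp
  ring

lemma hasDerivAt_add_mul_sub_sq {𝕜 : Type*} [NontriviallyNormedField 𝕜] {P V : 𝕜 → 𝕜} {v x : 𝕜}
    (hP : HasDerivAt P (x * v) x) (hV : HasDerivAt V v x) (r κ : 𝕜) :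
    HasDerivAt (fun z ↦ P z + κ * (r - V z) ^ 2) (v * (x - 2 * κ * (r - V x))) x := by
  refine (hP.fun_add (((hV.const_sub r).fun_pow 2).const_mul κ)).congr_deriv ?_
  push_cast
  ring

theorem stmt_17 (β B N₀ L k c lam : ℝ) (hβ : 0 < β) (hB : 0 < B) (hN : 0 < N₀) (hL : 0 < L)
    (hk : 0 < k) (hc : 0 < c)
    (c₀ : ℝ) (hc₀ : c₀ = β * N₀ / (B * L))
    (G : ℝ → ℝ)
    (hG : ∀ x, G x = β * ((x * B / β) * Real.exp (-(c₀ / x)) - (N₀ / L) * E1 (c₀ / x))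
        + (c * β / k ^ 2) * (lam - B * E1 (c₀ / x)) ^ 2) :
    ∀ x, 0 < x →
      HasDerivAt G
        (B * Real.exp (-(c₀ / x))
          * (1 - (2 * c * β / (k ^ 2 * x)) * (lam - B * E1 (c₀ / x)))) x ∧
      (x ≤ (2 * c * β / k ^ 2) * (lam - B * E1 (c₀ / x)) →
        B * Real.exp (-(c₀ / x))
          * (1 - (2 * c * β / (k ^ 2 * x)) * (lam - B * E1 (c₀ / x))) ≤ 0) := by
  intro x hx
  have hc₀_pos : 0 < c₀ := hc₀ ▸ by positivity
  have hV : HasDerivAt (fun z ↦ B * E1 (c₀ / z)) (B * (Real.exp (-(c₀ / x)) / x)) x :=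
    (hasDerivAt_E1_const_div (by positivity)).const_mul B
  have hP : HasDerivAt (fun z ↦ B * (z * Real.exp (-(c₀ / z)) - c₀ * E1 (c₀ / z)))
      (x * (B * (Real.exp (-(c₀ / x)) / x))) x :=
    ((hasDerivAt_mul_exp_neg_div_sub_mul_E1 (by positivity)).const_mul B).congr_deriv
      (by field_simp)
  have hG_eq : G = fun z ↦ B * (z * Real.exp (-(c₀ / z)) - c₀ * E1 (c₀ / z))
      + c * β / k ^ 2 * (lam - B * E1 (c₀ / z)) ^ 2 := by
    have hBc₀ : B * c₀ = β * (N₀ / L) := by rw [hc₀]; field_simp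
    funext z
    rw [hG, mul_sub, mul_sub, ← mul_assoc β (N₀ / L), ← hBc₀]
    field_simp
  have hderiv_eq : B * (Real.exp (-(c₀ / x)) / x)
        * (x - 2 * (c * β / k ^ 2) * (lam - B * E1 (c₀ / x)))
      = B * Real.exp (-(c₀ / x))
        * (1 - (2 * c * β / (k ^ 2 * x)) * (lam - B * E1 (c₀ / x))) := by
    field_simp
  rw [← hderiv_eq, hG_eq]
  refine ⟨hasDerivAt_add_mul_sub_sq hP hV lam _, fun hle ↦ ?_⟩
  refine mul_nonpos_of_nonneg_of_nonpos (by positivity) (sub_nonpos.mpr (hle.trans_eq ?_))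
  ring
end
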